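/- Let M be the free metabelian group on the set {a₁,…,a_m} ∪ {t₁,…,t_k}, and let R'₂ = {[a_i, a_j] : 1 ≤ i,j ≤ m} ∪ {[a_i, a_j^{t_s}] : 1 ≤ i,j ≤ m, 1 ≤ s ≤ k} ⊆ M. Then for all 1 ≤ i,j ≤ m and every word u in the letters t₁^{±1},…,t_k^{±1} of length ℓ ≥ 1, the element [a_i, a_j^{u}] of M can be written in M as a product of at most 4ℓ − 3 conjugates of elements of R'₂ ∪ R'₂⁻¹. -/

import Mathlib

open Function

/-- The length of the reduced word representing an element of a free group. -/
noncomputable def freeNorm {X : Type*} (w : FreeGroup X) : ℕ :=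
  letI := Classical.decEq X
  w.toWord.length

/-- `w` equals a product of exactly `N` conjugates of elements of `R ∪ R⁻¹`. -/
def AreaIs {G : Type*} [Group G] (R : Set G) (w : G) (N : ℕ) : Prop :=
  ∃ r f : Fin N → G, (∀ i, r i ∈ R ∨ (r i)⁻¹ ∈ R) ∧
    w = (List.ofFn fun i => (f i)⁻¹ * r i * f i).prod

/-- The area of `w` with respect to the relators `R` is at most `N`. -/
def AreaLe {G : Type*} [Group G] (R : Set G) (w : G) (N : ℕ) : Prop :=
  ∃ N' ≤ N, AreaIs R w N'

/-- `f ≼ g` : there is `C > 0` with `f n ≤ C * g (C * n) + C * n + C` for all `n`. -/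
def Dominates (f g : ℕ → ℕ) : Prop :=
  ∃ C : ℕ, 0 < C ∧ ∀ n, f n ≤ C * g (C * n) + C * n + C

/-- `f ≈ g` : mutual domination. -/
def DehnEquiv (f g : ℕ → ℕ) : Prop := Dominates f g ∧ Dominates g f

/-- `δ` is the Dehn function of the presentation with relator set `R`. -/
def IsDehnFunctionOf {X : Type*} (R : Set (FreeGroup X)) (δ : ℕ → ℕ) : Prop :=
  ∀ n, IsLeast {N | ∀ w ∈ Subgroup.normalClosure R, freeNorm w ≤ n → AreaLe R w N} (δ n)

/-- A group is metabelian if its derived subgroup is abelian. -/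
def IsMetabelian (G : Type*) [Group G] : Prop :=
  ∀ a b : G, a ∈ commutator G → b ∈ commutator G → a * b = b * a

instance derivedSeriesNormalInst {G : Type*} [Group G] (n : ℕ) : (derivedSeries G n).Normal :=
  derivedSeries_normal G n

/-- The free metabelian group on `X`: the free group modulo its second derived subgroup. -/
abbrev FreeMetabelian (X : Type*) := FreeGroup X ⧸ derivedSeries (FreeGroup X) 2

/-- The word length of `w` in the free metabelian group is at most `n`. -/
def mNormLe {X : Type*} (w : FreeMetabelian X) (n : ℕ) : Prop :=
  ∃ v : FreeGroup X, QuotientGroup.mk' (derivedSeries (FreeGroup X) 2) v = w ∧ freeNorm v ≤ n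

/-- `δ` is the relative Dehn function (in the variety of metabelian groups) of the
relative presentation with relator set `R`. -/
def IsRelDehnFunctionOf {X : Type*} (R : Set (FreeMetabelian X)) (δ : ℕ → ℕ) : Prop :=
  ∀ n, IsLeast {N | ∀ w ∈ Subgroup.normalClosure R, mNormLe w n → AreaLe R w N} (δ n)

/-- The paper's commutator convention: `[x, y] = x⁻¹ * y⁻¹ * x * y`. -/
def pcomm {G : Type*} [Group G] (x y : G) : G := x⁻¹ * y⁻¹ * x * y

/-- A group has torsion-free rank `k` if it has a finite-index subgroup isomorphic to `ℤ^k`. -/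
def HasTFRank (Q : Type*) [Group Q] (k : ℕ) : Prop :=
  ∃ H : Subgroup Q, H.index ≠ 0 ∧ Nonempty (H ≃* Multiplicative (Fin k → ℤ))

/-- `G ⧸ A` is abelian and has torsion-free rank `j`. -/
def QuotientRankProp {G : Type*} [Group G] (A : Subgroup G) [A.Normal] (j : ℕ) : Prop :=
  (∀ x y : G ⧸ A, x * y = y * x) ∧ HasTFRank (G ⧸ A) j

/-- The set of torsion-free ranks of quotients `G ⧸ A` by abelian normal subgroups `A`
with `G ⧸ A` abelian. -/
def abelianRankSet (G : Type*) [Group G] : Set ℕ :=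
  {j | ∃ A : Subgroup G, ∃ h : A.Normal, (∀ x y : G, x ∈ A → y ∈ A → x * y = y * x) ∧
    @QuotientRankProp G _ A h j}

/-- Generator `aᵢ` of the free metabelian group on `{a₁,…,a_m} ∪ {t₁,…,t_k}`. -/
noncomputable def ma {m k : ℕ} (i : Fin m) : FreeMetabelian (Fin m ⊕ Fin k) :=
  QuotientGroup.mk' (derivedSeries (FreeGroup (Fin m ⊕ Fin k)) 2) (FreeGroup.of (Sum.inl i))

/-- Generator `tₛ` of the free metabelian group on `{a₁,…,a_m} ∪ {t₁,…,t_k}`. -/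
noncomputable def mgt {m k : ℕ} (s : Fin k) : FreeMetabelian (Fin m ⊕ Fin k) :=
  QuotientGroup.mk' (derivedSeries (FreeGroup (Fin m ⊕ Fin k)) 2) (FreeGroup.of (Sum.inr s))

/-- The image in the free metabelian group of a word `u` in the letters `t₁^{±1},…,t_k^{±1}`. -/
noncomputable def tword {m k : ℕ} (u : FreeGroup (Fin k)) : FreeMetabelian (Fin m ⊕ Fin k) :=
  FreeGroup.lift (fun s => (mgt s : FreeMetabelian (Fin m ⊕ Fin k))) u

/-- The relator set `R'₂ = {[aᵢ,aⱼ]} ∪ {[aᵢ,aⱼ^{tₛ}]}`. -/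
noncomputable def R2' (m k : ℕ) : Set (FreeMetabelian (Fin m ⊕ Fin k)) :=
  {w | (∃ i j : Fin m, w = pcomm (ma i) (ma j)) ∨
       (∃ (i j : Fin m) (s : Fin k), w = pcomm (ma i) ((mgt s)⁻¹ * ma j * mgt s))}

/-!
In a metabelian group `G`, conjugation makes `G'` a module over the commutative ring `ℤ[G/G']`, on
which `d ↦ [x, d]` acts as a ring element; hence `[x, d^v] = [x, d]^v` for `d ∈ G'`. Since
`y^{sv} = y^v [y, s]^v`, this gives `[x, y^{sv}] = [x, [y, s]]^v · [x, y^v]^g` with `g = [y, s]^v`,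
and writing `[y, s] = y⁻¹ y^s` shows that `[x, [y, s]]` is the product of `[x, y^s]` and a
conjugate of `[x, y]⁻¹`. Each letter of `u` after the first therefore costs two relators, for a
total of `2ℓ - 1 ≤ 4ℓ - 3`; the inverse letters are handled by
`[x, y^{s⁻¹}] = ([y, x^s]⁻¹)^{s⁻¹}`.
-/

namespace AreaLe

variable {G : Type*} [Group G] {R : Set G} {v w : G} {M N : ℕ}

theorem mono (h : AreaLe R w N) (hNM : N ≤ M) : AreaLe R w M :=
  let ⟨n, hn, hw⟩ := h
  ⟨n, hn.trans hNM, hw⟩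

theorem of_mem (h : w ∈ R) : AreaLe R w 1 :=
  ⟨1, le_rfl, fun _ ↦ w, fun _ ↦ 1, fun _ ↦ .inl h, by simp⟩

theorem mul (hv : AreaLe R v N) (hw : AreaLe R w M) : AreaLe R (v * w) (N + M) := by
  obtain ⟨n, hn, r, f, hr, rfl⟩ := hv
  obtain ⟨n', hn', r', f', hr', rfl⟩ := hw
  refine ⟨n + n', by lia, Fin.append r r', Fin.append f f', ?_, ?_⟩
  · exact Fin.addCases (by simpa using hr) (by simpa using hr')
  · simp [List.ofFn_add]

theorem inv (h : AreaLe R w N) : AreaLe R w⁻¹ N := by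
  obtain ⟨n, hn, r, f, hr, rfl⟩ := h
  refine ⟨n, hn, fun i ↦ (r i.rev)⁻¹, fun i ↦ f i.rev, fun i ↦ ?_, ?_⟩
  · simpa using (hr i.rev).symm
  · rw [List.prod_inv_reverse]
    congr 1
    exact List.ext_getElem (by simp) fun i _ _ ↦ by
      simp [Fin.rev, mul_assoc, Nat.sub_sub, Nat.add_comm 1]

theorem conj (h : AreaLe R w N) (g : G) : AreaLe R (g⁻¹ * w * g) N := by
  obtain ⟨n, hn, r, f, hr, rfl⟩ := h
  refine ⟨n, hn, r, fun i ↦ f i * g, hr, ?_⟩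
  have conj_prod := map_list_prod (MulAut.conj g⁻¹) (List.ofFn fun i ↦ (f i)⁻¹ * r i * f i)
  simpa [List.map_ofFn, Function.comp_def, mul_assoc] using conj_prod

end AreaLe

section Commutators

variable {G : Type*} [Group G]

theorem pcomm_mem_commutator (x y : G) : pcomm x y ∈ commutator G := by
  rw [commutator_def]
  simpa [pcomm, commutatorElement_def] using
    Subgroup.commutator_mem_commutator (Subgroup.mem_top x⁻¹) (Subgroup.mem_top y⁻¹)

theorem pcomm_mul_left (x y z : G) :
    pcomm (x * y) z = y⁻¹ * pcomm x z * y * pcomm y z := by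
  simp [pcomm, mul_assoc]

theorem pcomm_mul_right (x y z : G) :
    pcomm x (y * z) = pcomm x z * (z⁻¹ * pcomm x y * z) := by
  simp [pcomm, mul_assoc]

theorem pcomm_inv_right (x y : G) : pcomm x y⁻¹ = y⁻¹⁻¹ * (pcomm x y)⁻¹ * y⁻¹ := by
  simp [pcomm, mul_assoc]

theorem pcomm_conj_conj (x y g : G) :
    pcomm (g⁻¹ * x * g) (g⁻¹ * y * g) = g⁻¹ * pcomm x y * g := by
  simp [pcomm, mul_assoc]

theorem pcomm_conj_inv_right (x y g : G) :
    pcomm x (g⁻¹⁻¹ * y * g⁻¹) = g⁻¹⁻¹ * (pcomm y (g⁻¹ * x * g))⁻¹ * g⁻¹ := by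
  simp [pcomm, mul_assoc]

theorem IsMetabelian.pcomm_conj_right (hG : IsMetabelian G) (x g : G) {d : G}
    (hd : d ∈ commutator G) : pcomm x (g⁻¹ * d * g) = g⁻¹ * pcomm x d * g := by
  set z := g⁻¹ * d * g with hz
  set c := pcomm g x with hc
  have hzG : z ∈ commutator G := by
    simpa [hz] using (inferInstance : (commutator G).Normal).conj_mem d hd g⁻¹
  have hcG : c ∈ commutator G := pcomm_mem_commutator g x
  have hcz : pcomm c z = 1 := by
    simp [pcomm, mul_assoc, hG c z hcG hzG]
  have hx : x = g⁻¹ * x * g * c := by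
    simp [hc, pcomm, mul_assoc]
  calc pcomm x z
      = c⁻¹ * pcomm (g⁻¹ * x * g) z * c * pcomm c z := by rw [← pcomm_mul_left, ← hx]
    _ = c⁻¹ * (pcomm (g⁻¹ * x * g) z * c) := by rw [hcz, mul_one, mul_assoc]
    _ = pcomm (g⁻¹ * x * g) z := by
        rw [hG _ c (pcomm_mem_commutator _ _) hcG, inv_mul_cancel_left]
    _ = g⁻¹ * pcomm x d * g := pcomm_conj_conj x d g

end Commutators

theorem isMetabelian_quotient_derivedSeries_two (G : Type*) [Group G] :
    IsMetabelian (G ⧸ derivedSeries G 2) := by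
  have derived_two : derivedSeries (G ⧸ derivedSeries G 2) 2 = ⊥ := by
    rw [← map_derivedSeries_eq (QuotientGroup.mk'_surjective (derivedSeries G 2)),
      QuotientGroup.map_mk'_self]
  have le_centralizer := Subgroup.commutator_eq_bot_iff_le_centralizer.mp derived_two
  exact fun x y hx hy ↦ (le_centralizer hx y hy).symm

section Conjugates

variable {G : Type*} [Group G] {R : Set G} {x y : G} {p q N : ℕ}

theorem AreaLe.pcomm_pcomm_right {s : G} (hxy : AreaLe R (pcomm x y) p)
    (hs : AreaLe R (pcomm x (s⁻¹ * y * s)) q) : AreaLe R (pcomm x (pcomm y s)) (q + p) := by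
  have expand : pcomm y s = y⁻¹ * (s⁻¹ * y * s) := by simp [pcomm, mul_assoc]
  rw [expand, pcomm_mul_right, pcomm_inv_right]
  exact hs.mul ((hxy.inv.conj _).conj _)

theorem AreaLe.pcomm_conj_mul (hG : IsMetabelian G) {s v : G} (hxy : AreaLe R (pcomm x y) p)
    (hs : AreaLe R (pcomm x (s⁻¹ * y * s)) q) (hv : AreaLe R (pcomm x (v⁻¹ * y * v)) N) :
    AreaLe R (pcomm x ((s * v)⁻¹ * y * (s * v))) (q + p + N) := by
  have expand : (s * v)⁻¹ * y * (s * v) = v⁻¹ * y * v * (v⁻¹ * pcomm y s * v) := by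
    simp [pcomm, mul_assoc]
  rw [expand, pcomm_mul_right, hG.pcomm_conj_right x v (pcomm_mem_commutator y s)]
  exact ((hxy.pcomm_pcomm_right hs).conj v).mul (hv.conj _)

theorem AreaLe.pcomm_conj_list_prod (hG : IsMetabelian G) (hxy : AreaLe R (pcomm x y) p)
    (s : G) (L : List G) (hL : ∀ g ∈ s :: L, AreaLe R (pcomm x (g⁻¹ * y * g)) q) :
    AreaLe R (pcomm x ((s :: L).prod⁻¹ * y * (s :: L).prod)) (q + L.length * (q + p)) := by
  induction L generalizing s with
  | nil => simpa using hL s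
  | cons s' L ih =>
    obtain ⟨hs, hL⟩ := List.forall_mem_cons.mp hL
    rw [List.prod_cons]
    refine (AreaLe.pcomm_conj_mul hG hxy hs (ih s' hL)).mono (le_of_eq ?_)
    rw [List.length_cons]
    ring

end Conjugates

theorem relative_commutation_cost_general {G σ : Type*} [Group G] (hG : IsMetabelian G)
    {R : Set G} {x y : G} {t : σ → G} (hxy : pcomm x y ∈ R)
    (hxt : ∀ s, pcomm x ((t s)⁻¹ * y * t s) ∈ R) (hyt : ∀ s, pcomm y ((t s)⁻¹ * x * t s) ∈ R)
    {u : FreeGroup σ} (hu : 1 ≤ freeNorm u) :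
    AreaLe R (pcomm x ((FreeGroup.lift t u)⁻¹ * y * FreeGroup.lift t u))
      (2 * freeNorm u - 1) := by
  let _ := Classical.decEq σ
  let value (l : σ × Bool) : G := cond l.2 (t l.1) (t l.1)⁻¹
  have area_value (l : σ × Bool) : AreaLe R (pcomm x ((value l)⁻¹ * y * value l)) 1 := by
    obtain ⟨s, _ | _⟩ := l
    · simp only [value, cond_false]
      rw [pcomm_conj_inv_right]
      exact (AreaLe.of_mem (hyt s)).inv.conj _
    · exact .of_mem (hxt s)
  have norm_eq : freeNorm u = u.toWord.length := rfl
  obtain ⟨l, L, hword⟩ := List.exists_cons_of_length_pos (norm_eq ▸ hu)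
  have lift_eq : FreeGroup.lift t u = (value l :: L.map value).prod := by
    rw [← List.map_cons, ← hword, ← FreeGroup.lift_mk, FreeGroup.mk_toWord]
  have area_letters : ∀ g ∈ value l :: L.map value, AreaLe R (pcomm x (g⁻¹ * y * g)) 1 := by
    rw [List.forall_mem_cons, List.forall_mem_map]
    exact ⟨area_value l, fun l' _ ↦ area_value l'⟩
  rw [norm_eq, hword, lift_eq]
  refine (AreaLe.pcomm_conj_list_prod hG (.of_mem hxy) _ _ area_letters).mono ?_
  rw [List.length_map, List.length_cons]
  lia

/-- In the free metabelian group, `[aᵢ, aⱼ^u]` is a product of at most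
`4ℓ - 3` conjugates of elements of `R'₂ ∪ R'₂⁻¹`, where `ℓ` is the length of `u`. -/
theorem relative_commutation_cost (m k : ℕ) (i j : Fin m)
    (u : FreeGroup (Fin k)) (ℓ : ℕ) (hℓ : 1 ≤ ℓ) (hu : freeNorm u = ℓ) :
    AreaLe (R2' m k) (pcomm (ma i) ((tword u)⁻¹ * ma j * tword u)) (4 * ℓ - 3) := by
  subst hu
  exact (relative_commutation_cost_general (isMetabelian_quotient_derivedSeries_two _)
    (.inl ⟨i, j, rfl⟩) (fun s ↦ .inr ⟨i, j, s, rfl⟩) (fun s ↦ .inr ⟨j, i, s, rfl⟩) hℓ).mono (by lia)
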